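/- The positive Munchausen numbers in base 7 are exactly 1 and 3665; that is, for n ≥ 1, n = P_7(n) if and only if n ∈ {1, 3665}. -/

import Mathlib

/-!
A base-`b` number with `L` digits is at least `b ^ (L - 1)`, while its digit power sum is at most
`L * (b - 1) ^ (b - 1)`; since `2 * (b - 1) ^ (b - 1) ≤ b ^ (b - 1)` by Bernoulli's inequality, a
fixed point has at most `b` digits. The digit power sum depends only on the multiset of digits, so
in base 7 it remains to test the `Nat.choose 14 7 = 3432` sums coming from multisets of at most
seven digits, instead of all `7 ^ 7` numbers.
-/

/-- Digit power sum: `P b n = Σ cᵢ^cᵢ` over the base-`b` digits of `n`, with `0^0 = 1`. -/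
def P (b n : ℕ) : ℕ := ((Nat.digits b n).map (fun c => c ^ c)).sum

theorem P_le_length_digits_mul {b : ℕ} (hb : 1 < b) (n : ℕ) :
    P b n ≤ (Nat.digits b n).length * (b - 1) ^ (b - 1) := by
  have digit_pow_le : ∀ x ∈ (Nat.digits b n).map (fun c => c ^ c), x ≤ (b - 1) ^ (b - 1) := by
    simp only [List.forall_mem_map]
    exact fun c hc => Nat.pow_self_mono (Nat.le_sub_one_of_lt (Nat.digits_lt_base hb hc))
  simpa only [P, List.length_map, smul_eq_mul] using List.sum_le_card_nsmul _ _ digit_pow_le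

theorem two_mul_pow_self_le_succ_pow {a : ℕ} (ha : a ≠ 0) : 2 * a ^ a ≤ (a + 1) ^ a :=
  calc
    2 * a ^ a = a ^ a + a * a ^ (a - 1) * 1 := by rw [mul_pow_sub_one ha]; ring
    _ ≤ (a + 1) ^ a := pow_add_mul_le_add_pow a.zero_le (Nat.zero_le _) a

theorem succ_mul_pow_self_lt_succ_pow {a k : ℕ} (ha : a ≠ 0) (hk : a < k) :
    (k + 1) * a ^ a < (a + 1) ^ k := by
  have pow_self_pos : 0 < a ^ a := Nat.pow_self_pos
  induction k, hk using Nat.le_induction with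
  | base =>
    calc
      (a + 1 + 1) * a ^ a < (a + 1) * (2 * a ^ a) := by nlinarith [Nat.pos_of_ne_zero ha]
      _ ≤ (a + 1) * (a + 1) ^ a := by gcongr; exact two_mul_pow_self_le_succ_pow ha
      _ = (a + 1) ^ (a + 1) := (pow_succ' _ _).symm
  | succ k _ ih =>
    calc
      (k + 1 + 1) * a ^ a ≤ 2 * ((k + 1) * a ^ a) := by nlinarith
      _ < 2 * (a + 1) ^ k := by gcongr
      _ ≤ (a + 1) * (a + 1) ^ k := by gcongr; omega
      _ = (a + 1) ^ (k + 1) := (pow_succ' _ _).symm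

theorem length_digits_le_of_eq_P {b n : ℕ} (hb : 1 < b) (h : n = P b n) :
    (Nat.digits b n).length ≤ b := by
  obtain ⟨a, rfl⟩ := Nat.exists_eq_add_of_le' hb.le
  by_contra! hlen
  obtain ⟨k, hk⟩ := Nat.exists_eq_add_one_of_ne_zero (Nat.ne_zero_of_lt hlen)
  have pow_le : (a + 1) ^ k ≤ n := by
    rw [← Nat.lt_digits_length_iff hb]
    omega
  have le_mul : n ≤ (k + 1) * a ^ a :=
    calc
      n = P (a + 1) n := h
      _ ≤ (Nat.digits (a + 1) n).length * a ^ a := P_le_length_digits_mul hb n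
      _ = (k + 1) * a ^ a := by rw [hk]
  have mul_lt : (k + 1) * a ^ a < (a + 1) ^ k :=
    succ_mul_pow_self_lt_succ_pow (by omega) (by omega)
  omega

/-- The sums of `f` over the multisets of `k` elements of `{0, …, b - 1}`, one entry per multiset.
In the last clause `p.2` is the multiplicity of `b` and `p.1` the number of the other elements. A
list avoids the equality tests that a `Finset` would need when the sums are enumerated. -/
def multisetSums {M : Type*} [AddMonoid M] (f : ℕ → M) : ℕ → ℕ → List M
  | 0, 0 => [0]
  | 0, _ + 1 => []
  | b + 1, k =>
    (List.Nat.antidiagonal k).flatMap fun p => (multisetSums f b p.1).map (p.2 • f b + ·)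

theorem sum_map_mem_multisetSums {M : Type*} [AddCommMonoid M] (f : ℕ → M) {b : ℕ} {l : List ℕ}
    (hl : ∀ d ∈ l, d < b) : (l.map f).sum ∈ multisetSums f b l.length := by
  induction b generalizing l with
  | zero =>
    obtain rfl : l = [] := List.eq_nil_iff_forall_not_mem.2 fun d hd => Nat.not_lt_zero d (hl d hd)
    simp [multisetSums]
  | succ b ih =>
    have perm : l.Perm (List.replicate (l.count b) b ++ l.filter (· != b)) := by
      rw [← List.filter_beq]
      exact (List.filter_append_perm (· == b) l).symm
    have filter_lt : ∀ d ∈ l.filter (· != b), d < b := by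
      intro d hd
      simp only [List.mem_filter, bne_iff_ne] at hd
      have := hl d hd.1
      omega
    have length_eq : (l.filter (· != b)).length + l.count b = l.length := by
      rw [perm.length_eq, List.length_append, List.length_replicate, add_comm]
    have sum_eq : l.count b • f b + ((l.filter (· != b)).map f).sum = (l.map f).sum := by
      rw [(perm.map f).sum_eq, List.map_append, List.sum_append, List.map_replicate,
        List.sum_replicate]
    exact List.mem_flatMap.2 ⟨(_, _), List.Nat.mem_antidiagonal.2 length_eq,
      List.mem_map.2 ⟨_, ih filter_lt, sum_eq⟩⟩

theorem P_mem_multisetSums {b : ℕ} (hb : 1 < b) (n : ℕ) :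
    P b n ∈ multisetSums (fun c => c ^ c) b (Nat.digits b n).length :=
  sum_map_mem_multisetSums _ fun _ => Nat.digits_lt_base hb

theorem eq_of_mem_multisetSums_of_eq_P_seven :
    ∀ L ≤ 7, ∀ n ∈ multisetSums (fun c => c ^ c) 7 L,
      n = P 7 n → n = 0 ∨ n = 1 ∨ n = 3665 := by
  -- `List.all` is evaluated iteratively; the instance for `∀ n ∈ l, _` recurses as deep as `l` is
  -- long.
  have all_sums : ∀ L ≤ 7, (multisetSums (fun c => c ^ c) 7 L).all fun n =>
      decide (n = P 7 n → n = 0 ∨ n = 1 ∨ n = 3665) := by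
    decide +kernel
  simpa only [List.all_eq_true, decide_eq_true_eq] using all_sums

theorem munchausen_base7 (n : ℕ) (hn : 1 ≤ n) :
    n = P 7 n ↔ n ∈ ({1, 3665} : Set ℕ) := by
  rw [Set.mem_insert_iff, Set.mem_singleton_iff]
  constructor
  · intro h
    have length_le : (Nat.digits 7 n).length ≤ 7 := length_digits_le_of_eq_P (by norm_num) h
    have P_eq : P 7 n = 0 ∨ P 7 n = 1 ∨ P 7 n = 3665 :=
      eq_of_mem_multisetSums_of_eq_P_seven _ length_le _ (P_mem_multisetSums (by norm_num) n)
        (congrArg (P 7) h)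
    omega
  · rintro (rfl | rfl) <;> norm_num [P]
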